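/- arXiv:0904.1158 — 2 statements merged into one kernel-verified Lean document; each statement's English description precedes it below -/
import Mathlib

section
/- Let D be the cell set of a skew shifted Young diagram with n cells and let T and S be two standard tableaux of shape D. Then the content sequence of T and the content sequence of S are equivalent under admissible transpositions. -/
/-- A strict partition: a strictly decreasing list of positive integers. -/
def StrictPartition (l : List ℕ) : Prop :=
  l.Chain' (· > ·) ∧ ∀ x ∈ l, 0 < x

/-- The shifted Young diagram of a strict partition (0-indexed):
row `r` consists of the cells `(r, j)` with `r ≤ j < r + λ_r`. -/
def shiftedCells (l : List ℕ) : Set (ℕ × ℕ) :=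
  {p : ℕ × ℕ | p.1 ≤ p.2 ∧ p.2 < p.1 + l.getD p.1 0}

/-- `D` is the cell set of a skew shifted Young diagram. -/
def IsSkewShifted (D : Set (ℕ × ℕ)) : Prop :=
  ∃ lam mu : List ℕ, StrictPartition lam ∧ StrictPartition mu ∧
    (∀ r, mu.getD r 0 ≤ lam.getD r 0) ∧ D = shiftedCells lam \ shiftedCells mu

/-- A standard tableau of shape `D` with `n` cells: a bijection from `{1,…,n}`
(i.e. `Fin n`) onto `D` whose labels increase along rows and down columns. -/
def IsStandard {n : ℕ} (D : Set (ℕ × ℕ)) (T : Fin n → ℕ × ℕ) : Prop :=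
  Function.Injective T ∧ Set.range T = D ∧
  (∀ k l : Fin n, (T l).1 = (T k).1 → (T l).2 = (T k).2 + 1 → k < l) ∧
  (∀ k l : Fin n, (T l).1 = (T k).1 + 1 → (T l).2 = (T k).2 → k < l)

/-- The content sequence of a tableau: the content `j − r` of the cell labeled `k`. -/
def contentSeq {n : ℕ} (T : Fin n → ℕ × ℕ) : Fin n → ℕ := fun k => (T k).2 - (T k).1

/-- A tuple `i ∈ ℕ^n` is splittable if whenever `i k = i l` with `k < l`:
if the common value is `0` then `1` occurs strictly between, and if it is `≥ 1`
then both the value minus one and the value plus one occur strictly between. -/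
def Splittable {n : ℕ} (i : Fin n → ℕ) : Prop :=
  ∀ k l : Fin n, k < l → i k = i l →
    (i k = 0 → ∃ a, k < a ∧ a < l ∧ i a = 1) ∧
    (1 ≤ i k → (∃ a, k < a ∧ a < l ∧ i a + 1 = i k) ∧ (∃ a, k < a ∧ a < l ∧ i a = i k + 1))

/-- `j` is obtained from `i` by one admissible simple transposition. -/
def AdmissibleSwap {n : ℕ} (i j : Fin n → ℕ) : Prop :=
  ∃ (k : ℕ) (hk : k + 1 < n),
    i ⟨k, Nat.lt_of_succ_lt hk⟩ ≠ i ⟨k + 1, hk⟩ + 1 ∧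
    i ⟨k + 1, hk⟩ ≠ i ⟨k, Nat.lt_of_succ_lt hk⟩ + 1 ∧
    j = i ∘ Equiv.swap ⟨k, Nat.lt_of_succ_lt hk⟩ ⟨k + 1, hk⟩

/-- Equivalence of tuples under finite chains of admissible transpositions. -/
def EquivTuples {n : ℕ} (i j : Fin n → ℕ) : Prop :=
  Relation.ReflTransGen AdmissibleSwap i j

/-!
A standard tableau of shape `D` is a linear extension of `D` with the product order, because any
two comparable cells of a skew shifted diagram are joined by a path of unit steps inside it. Let
`T`, `S` be two linear extensions of a finite poset. Unless `S⁻¹ ∘ T` is the identity, it has a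
descent: `T` gives consecutive labels to two elements which `S` lists in the opposite order. These
are incomparable, and exchanging them in `T` leaves a linear extension whose `S⁻¹ ∘ T` is
lexicographically smaller. So `T` is turned into `S` by exchanges of incomparable elements with
consecutive labels, and these are admissible since incomparable cells have contents at least two
apart.
-/

open Relation

section LinearExtensions

variable {ι α : Type*} [LinearOrder ι]

theorem swap_le_swap_of_covBy {a b x y : ι} (hab : a ⋖ b) (hxy : x ≤ y)
    (hne : ¬(x = a ∧ y = b)) : Equiv.swap a b x ≤ Equiv.swap a b y := by
  simp only [Equiv.swap_apply_def]
  split_ifs <;> grind [hab.lt, CovBy.le_of_lt, CovBy.ge_of_gt]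

theorem eq_id_of_forall_covBy_le [Finite ι] {f : ι → ι} (hf : Function.Injective f)
    (hle : ∀ a b, a ⋖ b → f a ≤ f b) : f = id := by
  cases nonempty_fintype ι
  let := Fintype.toLocallyFiniteOrder (α := ι)
  have hmono : StrictMono f := ((monotone_iff_forall_covBy f).2 hle).strictMono_of_injective hf
  exact funext fun x => le_antisymm hmono.apply_le hmono.le_apply

/-- One exchange of two incomparable elements that carry consecutive labels. A labeling of a poset
`α` by `ι` is encoded as `T : ι ≃ α`, and it is a linear extension when `T.symm` is monotone. -/
def IncompSwap [LE α] (T U : ι ≃ α) : Prop :=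
  ∃ a b, a ⋖ b ∧ IncompRel (· ≤ ·) (T a) (T b) ∧ U = (Equiv.swap a b).trans T

variable [Preorder α]

theorem monotone_symm_swap_trans {T : ι ≃ α} (hT : Monotone T.symm) {a b : ι} (hab : a ⋖ b)
    (hnle : ¬T a ≤ T b) : Monotone ((Equiv.swap a b).trans T).symm := by
  intro x y hxy
  refine swap_le_swap_of_covBy hab (hT hxy) ?_
  rintro ⟨rfl, rfl⟩
  exact hnle (by simpa using hxy)

theorem reflTransGen_incompSwap [Finite ι] {T S : ι ≃ α} (hT : Monotone T.symm)
    (hS : Monotone S.symm) : ReflTransGen IncompSwap T S := by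
  induction hσ : toLex (S.symm ∘ T) using WellFoundedLT.induction generalizing T with
  | ind σ ih =>
    subst hσ
    by_cases hle : ∀ a b, a ⋖ b → S.symm (T a) ≤ S.symm (T b)
    · have hid : S.symm ∘ T = id :=
        eq_id_of_forall_covBy_le (S.symm.injective.comp T.injective) hle
      obtain rfl : T = S := Equiv.ext fun a => S.symm_apply_eq.1 (congrFun hid a)
      exact .refl
    · push Not at hle
      obtain ⟨a, b, hab, hdesc⟩ := hle
      have hnle : ¬T a ≤ T b := fun h => (hS h).not_gt hdesc
      have hnge : ¬T b ≤ T a := fun h => hab.lt.not_ge (by simpa using hT h)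
      exact .head ⟨a, b, hab, ⟨hnle, hnge⟩, rfl⟩
        (ih _ (Pi.lex_desc hab.le hdesc) (monotone_symm_swap_trans hT hab hnle) rfl)

end LinearExtensions

section SkewShiftedDiagrams

theorem StrictPartition.getD_succ_lt {l : List ℕ} (hl : StrictPartition l) {r : ℕ}
    (hpos : 0 < l.getD (r + 1) 0) : l.getD (r + 1) 0 < l.getD r 0 := by
  have hr : r + 1 < l.length := by
    by_contra hr
    exact hpos.ne' (List.getD_eq_default l 0 (not_lt.1 hr))
  rw [List.getD_eq_getElem _ _ hr, List.getD_eq_getElem _ _ (Nat.lt_of_succ_lt hr)]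
  exact List.isChain_iff_getElem.1 hl.1 r hr

theorem StrictPartition.mem_shiftedCells_of_le {l : List ℕ} (hl : StrictPartition l)
    {p q : ℕ × ℕ} (hq : q ∈ shiftedCells l) (hpq : p ≤ q) (hp : p.1 ≤ p.2) :
    p ∈ shiftedCells l := by
  obtain ⟨hq₁, hq₂⟩ := hq
  have row_end_antitone : q.1 + l.getD q.1 0 ≤ p.1 + l.getD p.1 0 := by
    refine Nat.decreasingInduction' (P := fun r => q.1 + l.getD q.1 0 ≤ r + l.getD r 0)
      (fun r hr _ ih => ?_) hpq.1 le_rfl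
    have := hl.getD_succ_lt (r := r) (by omega)
    omega
  exact ⟨hp, (hpq.2.trans_lt hq₂).trans_le row_end_antitone⟩

variable {D : Set (ℕ × ℕ)}

theorem IsSkewShifted.fst_le_snd (hD : IsSkewShifted D) {p : ℕ × ℕ} (hp : p ∈ D) :
    p.1 ≤ p.2 := by
  obtain ⟨lam, mu, -, -, -, rfl⟩ := hD
  exact hp.1.1

theorem IsSkewShifted.mem_of_le_of_le (hD : IsSkewShifted D) {p m q : ℕ × ℕ} (hp : p ∈ D)
    (hq : q ∈ D) (hpm : p ≤ m) (hmq : m ≤ q) (hm : m.1 ≤ m.2) : m ∈ D := by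
  have hp_diag := hD.fst_le_snd hp
  obtain ⟨lam, mu, hlam, hmu, -, rfl⟩ := hD
  exact ⟨hlam.mem_shiftedCells_of_le hq.1 hmq hm,
    fun hm_mu => hp.2 (hmu.mem_shiftedCells_of_le hm_mu hpm hp_diag)⟩

theorem IsSkewShifted.exists_unit_step (hD : IsSkewShifted D) {p q : ℕ × ℕ} (hp : p ∈ D)
    (hq : q ∈ D) (hpq : p < q) :
    ∃ m ∈ D, m ≤ q ∧ (m = (p.1, p.2 + 1) ∨ m = (p.1 + 1, p.2)) := by
  have hp_diag := hD.fst_le_snd hp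
  have hq_diag := hD.fst_le_snd hq
  obtain ⟨hrow, hcol⟩ := hpq.le
  rcases hcol.lt_or_eq with hright | hcol_eq
  · have hmq : (p.1, p.2 + 1) ≤ q := ⟨hrow, hright⟩
    have hpm : p ≤ (p.1, p.2 + 1) := ⟨le_rfl, p.2.le_succ⟩
    exact ⟨_, hD.mem_of_le_of_le hp hq hpm hmq (Nat.le_succ_of_le hp_diag), hmq, .inl rfl⟩
  · have hdown : p.1 < q.1 := hrow.lt_of_ne fun hrow_eq => hpq.ne (Prod.ext hrow_eq hcol_eq)
    have hmq : (p.1 + 1, p.2) ≤ q := ⟨hdown, hcol⟩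
    have hpm : p ≤ (p.1 + 1, p.2) := ⟨p.1.le_succ, le_rfl⟩
    have hm_diag : p.1 + 1 ≤ p.2 := (hdown.trans_le hq_diag).trans_eq hcol_eq.symm
    exact ⟨_, hD.mem_of_le_of_le hp hq hpm hmq hm_diag, hmq, .inr rfl⟩

end SkewShiftedDiagrams

section StandardTableaux

variable {n : ℕ} {D : Set (ℕ × ℕ)}

theorem IsStandard.le_of_apply_le {T : Fin n → ℕ × ℕ} (hT : IsStandard D T)
    (hD : IsSkewShifted D) {k l : Fin n} (hkl : T k ≤ T l) : k ≤ l := by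
  obtain ⟨hinj, rfl, hrow, hcol⟩ := hT
  induction k using WellFoundedGT.induction with
  | ind k ih =>
    rcases hkl.eq_or_lt with heq | hlt
    · exact (hinj heq).le
    obtain ⟨_, ⟨m, rfl⟩, hml, hstep⟩ := hD.exists_unit_step ⟨k, rfl⟩ ⟨l, rfl⟩ hlt
    have hkm : k < m := by
      rcases hstep with hright | hdown
      · exact hrow k m (by rw [hright]) (by rw [hright])
      · exact hcol k m (by rw [hdown]) (by rw [hdown])
    exact hkm.le.trans (ih m hkm hml)

/-- A standard tableau as a bijection from labels to the cells of its shape. -/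
noncomputable def IsStandard.equiv {T : Fin n → ℕ × ℕ} (hT : IsStandard D T) : Fin n ≃ D :=
  (Equiv.ofInjective T hT.1).trans (Equiv.setCongr hT.2.1)

theorem IsStandard.monotone_equiv_symm {T : Fin n → ℕ × ℕ} (hT : IsStandard D T)
    (hD : IsSkewShifted D) : Monotone hT.equiv.symm := by
  intro x y hxy
  obtain ⟨k, rfl⟩ := hT.equiv.surjective x
  obtain ⟨l, rfl⟩ := hT.equiv.surjective y
  simpa only [Equiv.symm_apply_apply] using hT.le_of_apply_le hD hxy

theorem content_ne_content_add_one {p q : ℕ × ℕ} (hq : q.1 ≤ q.2) (h : IncompRel (· ≤ ·) p q) :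
    p.2 - p.1 ≠ q.2 - q.1 + 1 := by
  simp only [IncompRel, Prod.le_def] at h
  omega

theorem IncompSwap.admissibleSwap (hD : ∀ p ∈ D, p.1 ≤ p.2) {T U : Fin n ≃ D}
    (h : IncompSwap T U) :
    AdmissibleSwap (contentSeq fun k => (T k : ℕ × ℕ)) (contentSeq fun k => (U k : ℕ × ℕ)) := by
  obtain ⟨⟨a, ha⟩, ⟨b, hb⟩, hab, hincomp, rfl⟩ := h
  obtain rfl : a + 1 = b := Nat.covBy_iff_add_one_eq.1 (Fin.covBy_iff.1 hab)
  exact ⟨a, hb, content_ne_content_add_one (hD _ (T _).2) hincomp,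
    content_ne_content_add_one (hD _ (T _).2) hincomp.symm, rfl⟩

end StandardTableaux

/-- the content sequences of any two standard tableaux of the same
skew shifted shape are equivalent under admissible transpositions. -/
theorem content_seqs_equivalent (n : ℕ) (D : Set (ℕ × ℕ))
    (hD : IsSkewShifted D) (T S : Fin n → ℕ × ℕ)
    (hT : IsStandard D T) (hS : IsStandard D S) :
    EquivTuples (contentSeq T) (contentSeq S) := by
  have chain : ReflTransGen IncompSwap hT.equiv hS.equiv :=
    reflTransGen_incompSwap (hT.monotone_equiv_symm hD) (hS.monotone_equiv_symm hD)
  exact chain.lift (fun U : Fin n ≃ D => contentSeq fun k => (U k : ℕ × ℕ))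
    fun _ _ hswap => hswap.admissibleSwap fun _ hp => hD.fst_le_snd hp
end

section
/- The map sending a pair (λ, T), where λ is a strict partition of n and T is a standard tableau of shape the shifted Young diagram S(λ), to the content sequence of T, is a bijection onto the set of tuples i ∈ ℕ^n that are splittable, satisfy i_1 = 0, and satisfy for each 2 ≤ k ≤ n that either i_k + 1 ∈ {i_1,…,i_{k−1}} or (i_k ≥ 1 and i_k − 1 ∈ {i_1,…,i_{k−1}}). -/
/-!
Reading a standard tableau of shifted shape in the order of its labels fills each diagonal from the
top down. Hence the cell labeled `k` lies in the row whose index is the number of earlier labels of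
the same content, and the content sequence determines the tableau.

Conversely, this rule turns any tuple `i` into a filling. Splittability says that between two
consecutive occurrences of `c` there is a `c + 1`, and vice versa. The condition on neighbors says
that every `c + 1` is preceded by a `c`. So the occurrences of `c` and `c + 1` alternate, starting
with `c`, and at any time the diagonal `c` is as long as the diagonal `c + 1` or longer by one
cell: the diagonals always form the shifted diagram of a strict partition.
-/

section Interleaving

variable {α : Type*} [LinearOrder α] {s t : Finset α}

theorem card_le_card_of_interleaved (hlt : ∀ x ∈ s, ∃ z ∈ t, z < x)
    (hbtw : ∀ x ∈ s, ∀ y ∈ s, x < y → ∃ z ∈ t, x < z ∧ z < y) : s.card ≤ t.card := by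
  rcases t.eq_empty_or_nonempty with rfl | ht
  · simpa [Finset.eq_empty_iff_forall_notMem] using hlt
  -- The minimum of `t` precedes all of `s`, so it separates no two elements of `s`.
  have hcard : s.card ≤ (t.erase (t.min' ht)).card + 1 := by
    refine Finset.card_le_of_interleaved fun x hx y hy hxy _ => ?_
    obtain ⟨w, hw, hwx⟩ := hlt x hx
    obtain ⟨z, hz, hxz, hzy⟩ := hbtw x hx y hy hxy
    have hmin : t.min' ht < z := ((t.min'_le w hw).trans_lt hwx).trans hxz
    exact ⟨z, Finset.mem_erase.2 ⟨hmin.ne', hz⟩, hxz, hzy⟩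
  rwa [Finset.card_erase_add_one (t.min'_mem ht)] at hcard

end Interleaving

section Occurrences

variable {α : Type*} [DecidableEq α] {n : ℕ} {i : Fin n → α} {c : α} {m r : ℕ}

/-- The positions before `m` at which the tuple `i` takes the value `c`. When `i` is the content
sequence of a tableau, these are the labels before `m` on the diagonal `c`. The bound `m` is a
natural number, so that `m = n` gives all occurrences. -/
def occurrences (i : Fin n → α) (c : α) (m : ℕ) : Finset (Fin n) :=
  {a | a.val < m ∧ i a = c}

@[simp]
theorem mem_occurrences {a : Fin n} : a ∈ occurrences i c m ↔ a.val < m ∧ i a = c := by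
  simp [occurrences]

theorem card_occurrences_mono (i : Fin n → α) (c : α) :
    Monotone fun m => (occurrences i c m).card := by
  refine fun m m' h => Finset.card_le_card fun a ha => ?_
  rw [mem_occurrences] at ha ⊢
  exact ⟨ha.1.trans_le h, ha.2⟩

theorem card_occurrences_lt {k : Fin n} (hkm : k.val < m) :
    (occurrences i (i k) k).card < (occurrences i (i k) m).card := by
  have hsub : occurrences i (i k) k ⊆ occurrences i (i k) m := fun a ha => by
    rw [mem_occurrences] at ha ⊢
    exact ⟨ha.1.trans hkm, ha.2⟩
  refine Finset.card_lt_card ((Finset.ssubset_iff_of_subset hsub).2 ⟨k, ?_⟩)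
  simp [hkm]

theorem injOn_card_occurrences (i : Fin n → α) (c : α) :
    Set.InjOn (fun k : Fin n => (occurrences i c k).card) {k | i k = c} := by
  rintro a rfl b hb hab
  rcases lt_trichotomy a b with h | h | h
  · exact absurd hab (card_occurrences_lt h).ne
  · exact h
  · exact absurd hab (hb ▸ card_occurrences_lt (i := i) h).ne'

theorem exists_card_occurrences_eq (hr : r < (occurrences i c m).card) :
    ∃ k : Fin n, k.val < m ∧ i k = c ∧ (occurrences i c k).card = r := by
  have hmaps : Set.MapsTo (fun k : Fin n => (occurrences i c k).card) (occurrences i c m)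
      (Finset.range (occurrences i c m).card) := by
    intro k hk
    obtain ⟨hkm, rfl⟩ := mem_occurrences.1 hk
    simpa using card_occurrences_lt hkm
  have hinj : Set.InjOn (fun k : Fin n => (occurrences i c k).card) (occurrences i c m) :=
    (injOn_card_occurrences i c).mono fun k hk => (mem_occurrences.1 hk).2
  obtain ⟨k, hk, hkr⟩ := Finset.surjOn_of_injOn_of_card_le _ hmaps hinj (by simp)
    (Finset.mem_range.2 hr)
  obtain ⟨hkm, hkc⟩ := mem_occurrences.1 hk
  exact ⟨k, hkm, hkc, hkr⟩

theorem exists_card_occurrences_eq_zero [Infinite α] (i : Fin n → α) (m : ℕ) :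
    ∃ c, (occurrences i c m).card = 0 := by
  obtain ⟨c, hc⟩ := Infinite.exists_notMem_finset (Finset.univ.image i)
  refine ⟨c, Finset.card_eq_zero.2 (Finset.eq_empty_of_forall_notMem fun a ha => hc ?_)⟩
  exact Finset.mem_image.2 ⟨a, Finset.mem_univ a, (mem_occurrences.1 ha).2⟩

end Occurrences

section Splittable

variable {n : ℕ} {i : Fin n → ℕ}

/-- Every positive value of the tuple is preceded by an occurrence of the value minus one. For
splittable tuples this amounts to the conditions on the first entry and on earlier neighbors,
see `Splittable.isPredClosed_iff`. -/
def IsPredClosed (i : Fin n → ℕ) : Prop :=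
  ∀ (k : Fin n) (c : ℕ), i k = c + 1 → ∃ a < k, i a = c

theorem IsPredClosed.apply_eq_zero (hp : IsPredClosed i) {k : Fin n} (hk : k.val = 0) :
    i k = 0 := by
  by_contra hne
  obtain ⟨a, hak, -⟩ := hp k _ (Nat.succ_pred_eq_of_ne_zero hne).symm
  omega

theorem isPredClosed_of_neighbor (hzero : ∀ k : Fin n, k.val = 0 → i k = 0)
    (hnbr : ∀ k : Fin n, 1 ≤ k.val →
      (∃ a, a < k ∧ i a = i k + 1) ∨ (1 ≤ i k ∧ ∃ a, a < k ∧ i a + 1 = i k)) :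
    IsPredClosed i := by
  intro k
  induction k using WellFoundedLT.induction with
  | _ k ih =>
  intro c hc
  have hk : 1 ≤ k.val := Nat.one_le_iff_ne_zero.2 fun h => by simp [hzero k h] at hc
  rcases hnbr k hk with ⟨a, hak, ha⟩ | ⟨-, a, hak, ha⟩
  · -- An earlier `c + 2` is itself preceded by a `c + 1`, and that one by a `c`.
    obtain ⟨b, hba, hb⟩ := ih a hak (c + 1) (by omega)
    obtain ⟨d, hdb, hd⟩ := ih b (hba.trans hak) c hb
    exact ⟨d, hdb.trans (hba.trans hak), hd⟩
  · exact ⟨a, hak, by omega⟩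

namespace Splittable

theorem exists_eq_add_one (hs : Splittable i) {k l : Fin n} (hkl : k < l) (h : i k = i l) :
    ∃ a, k < a ∧ a < l ∧ i a = i k + 1 := by
  rcases Nat.eq_zero_or_pos (i k) with h0 | hpos
  · simpa [h0] using (hs k l hkl h).1 h0
  · exact ((hs k l hkl h).2 hpos).2

theorem card_occurrences_le (hs : Splittable i) (c m : ℕ) :
    (occurrences i c m).card ≤ (occurrences i (c + 1) m).card + 1 := by
  refine Finset.card_le_of_interleaved fun k hk l hl hkl _ => ?_
  rw [mem_occurrences] at hk hl
  obtain ⟨a, hka, hal, ha⟩ := hs.exists_eq_add_one hkl (hk.2.trans hl.2.symm)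
  exact ⟨a, mem_occurrences.2 ⟨Nat.lt_trans hal hl.1, by rw [ha, hk.2]⟩, hka, hal⟩

theorem card_occurrences_add_one_le (hs : Splittable i) (hp : IsPredClosed i) (c m : ℕ) :
    (occurrences i (c + 1) m).card ≤ (occurrences i c m).card := by
  refine card_le_card_of_interleaved (fun k hk => ?_) fun k hk l hl hkl => ?_
  · rw [mem_occurrences] at hk
    obtain ⟨a, hak, ha⟩ := hp k c hk.2
    exact ⟨a, mem_occurrences.2 ⟨Nat.lt_trans hak hk.1, ha⟩, hak⟩
  · rw [mem_occurrences] at hk hl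
    obtain ⟨a, hka, hal, ha⟩ := ((hs k l hkl (hk.2.trans hl.2.symm)).2 (by omega)).1
    exact ⟨a, mem_occurrences.2 ⟨Nat.lt_trans hal hl.1, by omega⟩, hka, hal⟩

theorem isPredClosed_iff (hs : Splittable i) :
    IsPredClosed i ↔ (∀ k : Fin n, k.val = 0 → i k = 0) ∧
      ∀ k : Fin n, 1 ≤ k.val →
        (∃ a, a < k ∧ i a = i k + 1) ∨ (1 ≤ i k ∧ ∃ a, a < k ∧ i a + 1 = i k) := by
  refine ⟨fun hp => ⟨fun k => hp.apply_eq_zero, fun k hk => ?_⟩,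
    fun h => isPredClosed_of_neighbor h.1 h.2⟩
  rcases hik : i k with _ | c
  · -- A later `0` is separated by a `1` from the `0` at the start.
    have hstart : i ⟨0, k.pos⟩ = 0 := hp.apply_eq_zero rfl
    obtain ⟨a, -, hak, ha⟩ := hs.exists_eq_add_one (k := ⟨0, k.pos⟩) hk (hstart.trans hik.symm)
    exact .inl ⟨a, hak, by rw [ha, hstart]⟩
  · obtain ⟨a, hak, ha⟩ := hp k c hik
    exact .inr ⟨Nat.succ_pos c, a, hak, congrArg (· + 1) ha⟩

end Splittable

end Splittable

section ShiftedConvex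

/-- Sets of cells on or above the main diagonal that are order-convex within that region. This is
the property of skew shifted diagrams which the combinatorics of their standard tableaux needs.
They need not be order-convex in `ℕ × ℕ`: `(1, 0)` lies between `(0, 0)` and `(1, 1)`. -/
structure IsShiftedConvex (D : Set (ℕ × ℕ)) : Prop where
  fst_le_snd : ∀ p ∈ D, p.1 ≤ p.2
  mem_of_le_of_le : ∀ p ∈ D, ∀ q ∈ D, ∀ x : ℕ × ℕ, x.1 ≤ x.2 → p ≤ x → x ≤ q → x ∈ D

theorem exists_fst_le_snd_and_covBy_of_lt {p q : ℕ × ℕ} (hp : p.1 ≤ p.2) (hq : q.1 ≤ q.2)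
    (hpq : p < q) :
    ∃ x : ℕ × ℕ, x.1 ≤ x.2 ∧ p ≤ x ∧ x ⋖ q := by
  obtain ⟨r, j⟩ := p
  obtain ⟨s, m⟩ := q
  simp only [Prod.mk_lt_mk, Prod.mk_le_mk, Prod.mk_covBy_mk_iff, Nat.covBy_iff_add_one_eq,
    Prod.exists] at *
  rcases lt_or_ge r s with hrs | hsr
  · exact ⟨s - 1, m, by omega⟩
  · exact ⟨s, m - 1, by omega⟩

end ShiftedConvex

section ShiftedCells

theorem lt_length_of_getD_ne {α : Type*} {l : List α} {r : ℕ} {a : α} (h : l.getD r a ≠ a) :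
    r < l.length := by
  contrapose! h
  exact List.getD_eq_default l a h

variable {l l' : List ℕ} {r c : ℕ}

theorem mk_add_mem_shiftedCells : (r, r + c) ∈ shiftedCells l ↔ c < l.getD r 0 := by
  simp [shiftedCells]

theorem getD_eq_of_shiftedCells_eq (h : shiftedCells l = shiftedCells l') (r : ℕ) :
    l.getD r 0 = l'.getD r 0 := by
  refine eq_of_forall_lt_iff fun c => ?_
  rw [← mk_add_mem_shiftedCells, h, mk_add_mem_shiftedCells]

theorem ncard_shiftedCells (l : List ℕ) : (shiftedCells l).ncard = l.sum := by
  have himage : shiftedCells l = (fun x : (_ : ℕ) × ℕ => (x.1, x.1 + x.2)) ''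
      ((Finset.range l.length).sigma fun r => Finset.range (l.getD r 0)) := by
    ext ⟨r, j⟩
    constructor
    · intro h
      obtain ⟨c, rfl⟩ : ∃ c, j = r + c := Nat.exists_eq_add_of_le h.1
      have hc := mk_add_mem_shiftedCells.1 h
      have hr := lt_length_of_getD_ne (Nat.ne_zero_of_lt hc)
      exact ⟨⟨r, c⟩, Finset.mem_sigma.2 ⟨Finset.mem_range.2 hr, Finset.mem_range.2 hc⟩, rfl⟩
    · rintro ⟨⟨r, c⟩, hrc, h⟩
      rw [← h, mk_add_mem_shiftedCells]
      exact Finset.mem_range.1 (Finset.mem_sigma.1 hrc).2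
  have hinj : Function.Injective fun x : (_ : ℕ) × ℕ => (x.1, x.1 + x.2) := by
    rintro ⟨r, c⟩ ⟨s, d⟩ h
    obtain ⟨rfl, hcd⟩ := Prod.mk.inj h
    obtain rfl := Nat.add_left_cancel hcd
    rfl
  rw [himage, Set.ncard_image_of_injective _ hinj, Set.ncard_coe_finset, Finset.card_sigma]
  simp [Finset.sum_range]

namespace StrictPartition

theorem getD_add_one_lt (hl : StrictPartition l) (hr : 0 < l.getD (r + 1) 0) :
    l.getD (r + 1) 0 < l.getD r 0 := by
  have hlen : r + 1 < l.length := lt_length_of_getD_ne hr.ne'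
  rw [List.getD_eq_getElem _ _ hlen, List.getD_eq_getElem _ _ (r.lt_succ_self.trans hlen)]
  exact List.isChain_iff_getElem.1 hl.1 r hlen

theorem add_getD_le {s : ℕ} (hl : StrictPartition l) (hrs : r ≤ s) (hs : 0 < l.getD s 0) :
    s + l.getD s 0 ≤ r + l.getD r 0 := by
  induction s, hrs using Nat.le_induction with
  | base => rfl
  | succ s _ ih =>
    have hlt := hl.getD_add_one_lt hs
    have := ih (hs.trans hlt)
    omega

theorem mem_shiftedCells_of_le_s7 (hl : StrictPartition l) {p q : ℕ × ℕ} (hq : q ∈ shiftedCells l)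
    (hp : p.1 ≤ p.2) (hpq : p ≤ q) : p ∈ shiftedCells l := by
  obtain ⟨hq₁, hq₂⟩ := hq
  have := hl.add_getD_le hpq.1 (by omega)
  exact ⟨hp, hpq.2.trans_lt (hq₂.trans_le this)⟩

theorem isShiftedConvex_shiftedCells (hl : StrictPartition l) :
    IsShiftedConvex (shiftedCells l) where
  fst_le_snd _ hp := hp.1
  mem_of_le_of_le _ _ _ hq _ hx _ hxq := hl.mem_shiftedCells_of_le_s7 hq hx hxq

theorem lt_length_iff (hl : StrictPartition l) : r < l.length ↔ 0 < l.getD r 0 := by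
  refine ⟨fun hr => ?_, fun hr => lt_length_of_getD_ne hr.ne'⟩
  rw [List.getD_eq_getElem _ _ hr]
  exact hl.2 _ (List.getElem_mem hr)

theorem injOn_shiftedCells : Set.InjOn shiftedCells {l | StrictPartition l} := by
  intro l hl l' hl' h
  have hlen : l.length = l'.length := eq_of_forall_lt_iff fun r => by
    rw [hl.lt_length_iff, hl'.lt_length_iff, getD_eq_of_shiftedCells_eq h]
  refine List.ext_getElem hlen fun r hr hr' => ?_
  simpa [List.getD_eq_getElem, hr, hr'] using getD_eq_of_shiftedCells_eq h r

end StrictPartition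

theorem exists_lt_iff_lt_of_antitone {d : ℕ → ℕ} (hd : Antitone d) (hzero : ∃ c, d c = 0) :
    ∃ g : ℕ → ℕ, ∀ r c, c < g r ↔ r < d c := by
  have hex (r : ℕ) : ∃ c, d c ≤ r := hzero.imp fun c hc => hc.trans_le r.zero_le
  refine ⟨fun r => Nat.find (hex r), fun r c => ?_⟩
  rw [Nat.lt_find_iff]
  exact ⟨fun h => not_le.1 (h c le_rfl), fun h b hb => not_le.2 (h.trans_le (hd hb))⟩

theorem exists_strictPartition_of_diagonals {d : ℕ → ℕ} (hle : ∀ c, d (c + 1) ≤ d c)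
    (hdrop : ∀ c, d c ≤ d (c + 1) + 1) (hzero : ∃ c, d c = 0) :
    ∃ l, StrictPartition l ∧ ∀ r c, (r, r + c) ∈ shiftedCells l ↔ r < d c := by
  obtain ⟨g, hg⟩ := exists_lt_iff_lt_of_antitone (antitone_nat_of_succ_le hle) hzero
  have hpos (r : ℕ) : 0 < g r ↔ r < d 0 := hg r 0
  have hstrict (r : ℕ) (hr : 0 < g (r + 1)) : g (r + 1) < g r := by
    obtain ⟨c, hc⟩ := Nat.exists_eq_add_one.2 hr
    have : r + 1 < d c := (hg _ _).1 (by omega)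
    rw [hc, hg]
    have := hdrop c
    omega
  refine ⟨(List.range (d 0)).map g, ⟨?_, ?_⟩, fun r c => ?_⟩
  · refine List.isChain_iff_getElem.2 fun r hr => ?_
    simp only [List.length_map, List.length_range] at hr
    simpa using hstrict r ((hpos _).2 hr)
  · simp [hpos]
  · rw [mk_add_mem_shiftedCells, ← hg]
    by_cases hr : r < d 0
    · simp [hr]
    · have hgr : g r = 0 := Nat.eq_zero_of_not_pos (mt (hpos r).1 hr)
      simp [hr, hgr]

end ShiftedCells

namespace IsStandard

section ShiftedConvex

variable {n : ℕ} {D : Set (ℕ × ℕ)} {T : Fin n → ℕ × ℕ} {k m : Fin n} {q : ℕ × ℕ}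

theorem apply_mem (hT : IsStandard D T) (k : Fin n) : T k ∈ D :=
  hT.2.1 ▸ Set.mem_range_self k

theorem exists_eq (hT : IsStandard D T) (hq : q ∈ D) : ∃ k, T k = q := by
  rwa [← hT.2.1] at hq

theorem lt_of_covBy (hT : IsStandard D T) (h : T k ⋖ T m) : k < m := by
  rcases Prod.covBy_iff.1 h with ⟨h₁, h₂⟩ | ⟨h₂, h₁⟩
  · exact hT.2.2.2 k m (Nat.covBy_iff_add_one_eq.1 h₁).symm h₂.symm
  · exact hT.2.2.1 k m h₁.symm (Nat.covBy_iff_add_one_eq.1 h₂).symm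

theorem le_of_le (hT : IsStandard D T) (hD : IsShiftedConvex D) (h : T k ≤ T m) : k ≤ m := by
  induction m using WellFoundedLT.induction with
  | _ m ih =>
  rcases h.eq_or_lt with heq | hlt
  · exact (hT.1 heq).le
  · obtain ⟨x, hx, hkx, hxm⟩ := exists_fst_le_snd_and_covBy_of_lt (hD.fst_le_snd _ (hT.apply_mem k))
      (hD.fst_le_snd _ (hT.apply_mem m)) hlt
    obtain ⟨a, rfl⟩ := hT.exists_eq
      (hD.mem_of_le_of_le _ (hT.apply_mem k) _ (hT.apply_mem m) x hx hkx hxm.le)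
    have ham : a < m := hT.lt_of_covBy hxm
    exact (ih a ham hkx).trans ham.le

theorem lt_of_lt (hT : IsStandard D T) (hD : IsShiftedConvex D) (h : T k < T m) : k < m :=
  (hT.le_of_le hD h.le).lt_of_ne fun hkm => h.ne (congrArg T hkm)

theorem exists_eq_of_lt_of_lt (hT : IsStandard D T) (hD : IsShiftedConvex D) (hq : q.1 ≤ q.2)
    (hkq : T k < q) (hqm : q < T m) : ∃ a, k < a ∧ a < m ∧ T a = q := by
  obtain ⟨a, rfl⟩ := hT.exists_eq
    (hD.mem_of_le_of_le _ (hT.apply_mem k) _ (hT.apply_mem m) q hq hkq.le hqm.le)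
  exact ⟨a, hT.lt_of_lt hD hkq, hT.lt_of_lt hD hqm, rfl⟩

theorem fst_lt_fst_of_contentSeq_eq (hT : IsStandard D T) (hD : IsShiftedConvex D)
    (hkm : k < m) (h : contentSeq T k = contentSeq T m) :
    (T k).1 < (T m).1 := by
  have hk := hD.fst_le_snd _ (hT.apply_mem k)
  have hm := hD.fst_le_snd _ (hT.apply_mem m)
  unfold contentSeq at h
  by_contra! hle
  exact hkm.not_ge (hT.le_of_le hD ⟨hle, by omega⟩)

theorem splittable_contentSeq (hT : IsStandard D T) (hD : IsShiftedConvex D) :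
    Splittable (contentSeq T) := by
  intro k m hkm hc
  have hfst := hT.fst_lt_fst_of_contentSeq_eq hD hkm hc
  have hk := hD.fst_le_snd _ (hT.apply_mem k)
  have hm := hD.fst_le_snd _ (hT.apply_mem m)
  have hsnd : (T k).2 < (T m).2 := by
    unfold contentSeq at hc
    omega
  have hright : ∃ a, k < a ∧ a < m ∧ contentSeq T a = contentSeq T k + 1 := by
    obtain ⟨a, hka, ham, ha⟩ := hT.exists_eq_of_lt_of_lt hD (q := ((T k).1, (T k).2 + 1))
      (hk.trans (Nat.le_succ _)) (Prod.lt_iff.2 (.inr ⟨le_rfl, Nat.lt_succ_self _⟩))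
      (Prod.lt_iff.2 (.inl ⟨hfst, hsnd⟩))
    exact ⟨a, hka, ham, by simp only [contentSeq, ha]; omega⟩
  refine ⟨fun hzero => by simpa [hzero] using hright, fun hpos => ⟨?_, hright⟩⟩
  have hoff : (T k).1 < (T k).2 := Nat.lt_of_sub_pos hpos
  obtain ⟨b, hkb, hbm, hb⟩ := hT.exists_eq_of_lt_of_lt hD (q := ((T k).1 + 1, (T k).2)) hoff
    (Prod.lt_iff.2 (.inl ⟨Nat.lt_succ_self _, le_rfl⟩)) (Prod.lt_iff.2 (.inr ⟨hfst, hsnd⟩))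
  exact ⟨b, hkb, hbm, by simp only [contentSeq, hb]; omega⟩

end ShiftedConvex

section StrictPartition

variable {n : ℕ} {l : List ℕ} {T : Fin n → ℕ × ℕ} {k : Fin n} {q : ℕ × ℕ}

theorem exists_lt_eq_of_lt (hT : IsStandard (shiftedCells l) T) (hl : StrictPartition l)
    (hq : q.1 ≤ q.2) (hqk : q < T k) : ∃ a < k, T a = q := by
  obtain ⟨a, rfl⟩ := hT.exists_eq (hl.mem_shiftedCells_of_le_s7 (hT.apply_mem k) hq hqk.le)
  exact ⟨a, hT.lt_of_lt hl.isShiftedConvex_shiftedCells hqk, rfl⟩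

theorem isPredClosed_contentSeq (hT : IsStandard (shiftedCells l) T) (hl : StrictPartition l) :
    IsPredClosed (contentSeq T) := by
  intro k c hc
  unfold contentSeq at hc
  obtain ⟨a, hak, ha⟩ := hT.exists_lt_eq_of_lt hl (q := ((T k).1, (T k).1 + c))
    (Nat.le_add_right _ _) (Prod.lt_iff.2 (.inr ⟨le_rfl, by dsimp only; omega⟩))
  exact ⟨a, hak, by simp [contentSeq, ha]⟩

theorem sum_eq (hT : IsStandard (shiftedCells l) T) : l.sum = n := by
  rw [← ncard_shiftedCells, ← hT.2.1, Set.ncard_range_of_injective hT.1, Nat.card_fin]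

theorem fst_apply_eq_card_occurrences (hT : IsStandard (shiftedCells l) T)
    (hl : StrictPartition l) (k : Fin n) :
    (T k).1 = (occurrences (contentSeq T) (contentSeq T k) k).card := by
  have hmono : StrictMonoOn (fun a => (T a).1) {a | contentSeq T a = contentSeq T k} :=
    fun a ha b hb hab => hT.fst_lt_fst_of_contentSeq_eq hl.isShiftedConvex_shiftedCells hab
      (ha.trans hb.symm)
  have himage : (occurrences (contentSeq T) (contentSeq T k) k).image (fun a => (T a).1) =
      Finset.range (T k).1 := by
    ext r
    simp only [Finset.mem_image, mem_occurrences, Finset.mem_range]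
    constructor
    · rintro ⟨a, ⟨hak, hc⟩, rfl⟩
      exact hmono hc rfl hak
    · intro hr
      have hk := (hT.apply_mem k).1
      obtain ⟨a, hak, ha⟩ := hT.exists_lt_eq_of_lt hl (q := (r, r + contentSeq T k))
        (Nat.le_add_right _ _)
        (Prod.lt_iff.2 (.inl ⟨hr, by dsimp only [contentSeq]; omega⟩))
      exact ⟨a, ⟨hak, by simp [contentSeq, ha]⟩, by rw [ha]⟩
  rw [← Finset.card_image_of_injOn (hmono.injOn.mono fun a ha => (mem_occurrences.1 ha).2), himage,
    Finset.card_range]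

end StrictPartition

end IsStandard

section TableauOfContents

variable {n : ℕ} {i : Fin n → ℕ}

/-- The filling that puts each label into the first free cell of the diagonal prescribed by `i`:
the inverse of `contentSeq`. -/
def tableauOfContents (i : Fin n → ℕ) (k : Fin n) : ℕ × ℕ :=
  ((occurrences i (i k) k).card, (occurrences i (i k) k).card + i k)

theorem contentSeq_tableauOfContents (i : Fin n → ℕ) : contentSeq (tableauOfContents i) = i := by
  ext k
  simp [contentSeq, tableauOfContents]

theorem IsStandard.tableauOfContents_contentSeq {l : List ℕ} {T : Fin n → ℕ × ℕ}
    (hT : IsStandard (shiftedCells l) T) (hl : StrictPartition l) :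
    tableauOfContents (contentSeq T) = T := by
  ext k
  · exact (hT.fst_apply_eq_card_occurrences hl k).symm
  · have hk := (hT.apply_mem k).1
    rw [tableauOfContents, ← hT.fst_apply_eq_card_occurrences hl k, contentSeq,
      Nat.add_sub_cancel' hk]

theorem injective_tableauOfContents (i : Fin n → ℕ) :
    Function.Injective (tableauOfContents i) := by
  intro a b h
  have hi : i a = i b := by
    rw [← contentSeq_tableauOfContents i, contentSeq, contentSeq, h]
  refine injOn_card_occurrences i (i b) hi rfl ?_
  simpa only [tableauOfContents, hi] using congrArg Prod.fst h

theorem mem_range_tableauOfContents {r c : ℕ} :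
    (r, r + c) ∈ Set.range (tableauOfContents i) ↔ r < (occurrences i c n).card := by
  constructor
  · rintro ⟨k, hk⟩
    simp only [tableauOfContents, Prod.mk.injEq] at hk
    obtain ⟨rfl, h⟩ := hk
    obtain rfl := Nat.add_left_cancel h
    exact card_occurrences_lt k.isLt
  · intro hr
    obtain ⟨k, -, rfl, hk⟩ := exists_card_occurrences_eq hr
    exact ⟨k, by rw [tableauOfContents, hk]⟩

theorem Splittable.lt_of_tableauOfContents_right (hs : Splittable i) (hp : IsPredClosed i)
    {k m : Fin n} (h₁ : (tableauOfContents i m).1 = (tableauOfContents i k).1)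
    (h₂ : (tableauOfContents i m).2 = (tableauOfContents i k).2 + 1) : k < m := by
  simp only [tableauOfContents] at h₁ h₂
  have hi : i m = i k + 1 := by omega
  by_contra! hle
  have hmk : m < k := hle.lt_of_ne (by rintro rfl; omega)
  have : (occurrences i (i m) m).card < (occurrences i (i k) k).card := calc
    _ < (occurrences i (i m) (m + 1)).card := card_occurrences_lt (Nat.lt_succ_self _)
    _ ≤ (occurrences i (i k) (m + 1)).card := hi ▸ hs.card_occurrences_add_one_le hp _ _
    _ ≤ (occurrences i (i k) k).card := card_occurrences_mono i _ hmk
  omega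

theorem Splittable.lt_of_tableauOfContents_below (hs : Splittable i)
    {k m : Fin n} (h₁ : (tableauOfContents i m).1 = (tableauOfContents i k).1 + 1)
    (h₂ : (tableauOfContents i m).2 = (tableauOfContents i k).2) : k < m := by
  simp only [tableauOfContents] at h₁ h₂
  have hi : i k = i m + 1 := by omega
  by_contra! hle
  have hmk : m < k := hle.lt_of_ne (by rintro rfl; omega)
  have : (occurrences i (i m) m).card < (occurrences i (i k) k).card + 1 := calc
    _ < (occurrences i (i m) (m + 1)).card := card_occurrences_lt (Nat.lt_succ_self _)
    _ ≤ (occurrences i (i k) (m + 1)).card + 1 := hi ▸ hs.card_occurrences_le _ _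
    _ ≤ (occurrences i (i k) k).card + 1 := Nat.succ_le_succ (card_occurrences_mono i _ hmk)
  omega

theorem Splittable.exists_isStandard_tableauOfContents (hs : Splittable i) (hp : IsPredClosed i) :
    ∃ l, StrictPartition l ∧ IsStandard (shiftedCells l) (tableauOfContents i) := by
  obtain ⟨l, hl, hmem⟩ := exists_strictPartition_of_diagonals
    (fun c => hs.card_occurrences_add_one_le hp c n) (fun c => hs.card_occurrences_le c n)
    (exists_card_occurrences_eq_zero i n)
  refine ⟨l, hl, injective_tableauOfContents i, ?_,
    fun k m => hs.lt_of_tableauOfContents_right hp, fun k m => hs.lt_of_tableauOfContents_below⟩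
  ext ⟨r, j⟩
  constructor
  · rintro ⟨k, hk⟩
    obtain ⟨c, rfl⟩ : ∃ c, j = r + c := by
      obtain ⟨rfl, rfl⟩ := Prod.mk.inj hk
      exact ⟨i k, rfl⟩
    exact (hmem r c).2 (mem_range_tableauOfContents.1 ⟨k, hk⟩)
  · intro h
    obtain ⟨c, rfl⟩ : ∃ c, j = r + c := Nat.exists_eq_add_of_le h.1
    exact mem_range_tableauOfContents.2 ((hmem r c).1 h)

end TableauOfContents

/-- pairs of a strict partition of `n` together with a standard
tableau of its shifted shape are in bijection, via the content sequence, with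
splittable tuples `i ∈ ℕ^n` with `i 0 = 0` such that every later entry has a
neighbor (value `± 1`) among the earlier entries. -/
theorem shifted_tableau_content_bijection (n : ℕ) :
    Set.BijOn (fun q : List ℕ × (Fin n → ℕ × ℕ) => contentSeq q.2)
      {q : List ℕ × (Fin n → ℕ × ℕ) |
        StrictPartition q.1 ∧ q.1.sum = n ∧ IsStandard (shiftedCells q.1) q.2}
      {i : Fin n → ℕ | Splittable i ∧ (∀ k : Fin n, k.val = 0 → i k = 0) ∧
        ∀ k : Fin n, 1 ≤ k.val →
          (∃ a, a < k ∧ i a = i k + 1) ∨ (1 ≤ i k ∧ ∃ a, a < k ∧ i a + 1 = i k)} := by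
  refine ⟨?_, ?_, ?_⟩
  · rintro ⟨l, T⟩ ⟨hl, -, hT⟩
    have hs : Splittable (contentSeq T) :=
      hT.splittable_contentSeq hl.isShiftedConvex_shiftedCells
    exact ⟨hs, hs.isPredClosed_iff.1 (hT.isPredClosed_contentSeq hl)⟩
  · rintro ⟨l, T⟩ ⟨hl, -, hT⟩ ⟨l', T'⟩ ⟨hl', -, hT'⟩ (h : contentSeq T = contentSeq T')
    obtain rfl : T = T' := calc
      T = tableauOfContents (contentSeq T) := (hT.tableauOfContents_contentSeq hl).symm
      _ = tableauOfContents (contentSeq T') := by rw [h]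
      _ = T' := hT'.tableauOfContents_contentSeq hl'
    obtain rfl : l = l' := StrictPartition.injOn_shiftedCells hl hl' (hT.2.1.symm.trans hT'.2.1)
    rfl
  · rintro i ⟨hs, hi⟩
    obtain ⟨l, hl, hT⟩ := hs.exists_isStandard_tableauOfContents (hs.isPredClosed_iff.2 hi)
    exact ⟨(l, tableauOfContents i), ⟨hl, hT.sum_eq, hT⟩, contentSeq_tableauOfContents i⟩
end
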